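/- arXiv:2505.00318 — 2 statements merged into one kernel-verified Lean document; each statement's English description precedes it below -/
import Mathlib

section
/- Let F : ℝ^d → ℝ be differentiable with L-Lipschitz gradient, let ω, g ∈ ℝ^d, let s > 0 satisfy s·L ≤ 1, and set ω' = ω − s·g. Then the inexact-gradient descent bound holds: F(ω') ≤ F(ω) − (s/2)·‖∇F(ω)‖² + (s/2)·‖g − ∇F(ω)‖². -/
/-!
Along the step, the derivative of `F` exceeds its initial value by at most a linear term, so
integrating gives the quadratic bound `F ω' ≤ F ω - s ⟪∇F ω, g⟫ + (L / 2) s² ‖g‖²`. Since `s L ≤ 1`,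
the quadratic term is at most `(s / 2) ‖g‖²`, and completing the square turns
`-s ⟪∇F ω, g⟫ + (s / 2) ‖g‖²` into `(s / 2) (‖g - ∇F ω‖² - ‖∇F ω‖²)`.
-/

open AffineMap Set
open scoped RealInnerProductSpace

theorem image_le_quadratic_of_deriv_right_le_affine {φ φ' : ℝ → ℝ} {a b m K : ℝ} (hab : a ≤ b)
    (hφ : ContinuousOn φ (Icc a b))
    (hφ' : ∀ t ∈ Ico a b, HasDerivWithinAt φ (φ' t) (Ici t) t)
    (bound : ∀ t ∈ Ico a b, φ' t ≤ m + K * (t - a)) :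
    φ b ≤ φ a + m * (b - a) + K / 2 * (b - a) ^ 2 := by
  have hasDerivAt_parabola (t : ℝ) :
      HasDerivAt (fun u ↦ φ a + m * (u - a) + K / 2 * (u - a) ^ 2) (m + K * (t - a)) t := by
    have hsub : HasDerivAt (fun u ↦ u - a) 1 t := (hasDerivAt_id t).sub_const a
    refine (((hsub.const_mul m).const_add (φ a)).add
      ((hsub.pow 2).const_mul (K / 2))).congr_deriv ?_
    rw [Nat.cast_ofNat]
    ring
  exact image_le_of_deriv_right_le_deriv_boundary hφ hφ' (by simp)
    (fun t _ ↦ (hasDerivAt_parabola t).continuousAt.continuousWithinAt)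
    (fun t _ ↦ (hasDerivAt_parabola t).hasDerivWithinAt) bound (right_mem_Icc.2 hab)

section NormedSpace

variable {E : Type*} [NormedAddCommGroup E] [NormedSpace ℝ E]

theorem apply_le_of_apply_smul_le_mul_norm_sq {𝓕 : Type*} [FunLike 𝓕 E ℝ]
    [MulActionHomClass 𝓕 ℝ E ℝ] {A : 𝓕} {v : E} {L t : ℝ} (ht : 0 < t)
    (h : A (t • v) ≤ L * ‖t • v‖ ^ 2) : A v ≤ L * ‖v‖ ^ 2 * t := by
  refine le_of_mul_le_mul_left ?_ ht
  calc
    t * A v = A (t • v) := (map_smul A t v).symm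
    _ ≤ L * ‖t • v‖ ^ 2 := h
    _ = t * (L * ‖v‖ ^ 2 * t) := by
      rw [norm_smul, Real.norm_of_nonneg ht.le]
      ring

theorem image_le_quadratic_of_hasFDerivWithinAt {f : E → ℝ}
    {f' : E → E →L[ℝ] ℝ} {S : Set E} {x y : E} {L : ℝ} (hS : StarConvex ℝ x S) (hy : y ∈ S)
    (hf : ∀ z ∈ S, HasFDerivWithinAt f (f' z) S z)
    (hf' : ∀ z ∈ S, (f' z - f' x) (z - x) ≤ L * ‖z - x‖ ^ 2) :
    f y ≤ f x + f' x (y - x) + L / 2 * ‖y - x‖ ^ 2 := by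
  have h_mem : MapsTo (lineMap x y) (Icc (0 : ℝ) 1) S := fun t ht ↦ by
    rw [lineMap_apply_module']
    exact add_comm x _ ▸ hS.add_smul_sub_mem hy ht.1 ht.2
  have h_deriv : ∀ t ∈ Icc (0 : ℝ) 1, HasDerivWithinAt (fun u : ℝ ↦ f (lineMap x y u))
      (f' (lineMap x y t) (y - x)) (Icc 0 1) t := fun t ht ↦
    (hf _ (h_mem ht)).comp_hasDerivWithinAt t hasDerivWithinAt_lineMap h_mem
  have h_bound : ∀ t ∈ Ico (0 : ℝ) 1,
      f' (lineMap x y t) (y - x) ≤ f' x (y - x) + L * ‖y - x‖ ^ 2 * (t - 0) := by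
    intro t ht
    rw [sub_zero]
    rcases ht.1.eq_or_lt with rfl | ht_pos
    · simp
    · rw [← sub_le_iff_le_add', ← sub_apply]
      refine apply_le_of_apply_smul_le_mul_norm_sq ht_pos ?_
      simpa [lineMap_apply_module'] using hf' _ (h_mem (Ico_subset_Icc_self ht))
  have h_image := image_le_quadratic_of_deriv_right_le_affine zero_le_one
    (fun t ht ↦ (h_deriv t ht).continuousWithinAt)
    (fun t ht ↦ (h_deriv t (Ico_subset_Icc_self ht)).mono_of_mem_nhdsWithin
      (Icc_mem_nhdsGE_of_mem ht)) h_bound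
  simp only [lineMap_apply_zero, lineMap_apply_one] at h_image
  linarith

end NormedSpace

section InnerProductSpace

variable {E : Type*} [NormedAddCommGroup E] [InnerProductSpace ℝ E]

theorem real_inner_le_mul_norm_sq {v w : E} {L : ℝ} (h : ‖v‖ ≤ L * ‖w‖) :
    ⟪v, w⟫ ≤ L * ‖w‖ ^ 2 :=
  calc
    ⟪v, w⟫ ≤ ‖v‖ * ‖w‖ := real_inner_le_norm v w
    _ ≤ L * ‖w‖ * ‖w‖ := by gcongr
    _ = L * ‖w‖ ^ 2 := by ring

theorem inexact_gradient_descent_bound_general [CompleteSpace E] {F : E → ℝ} {F' : E → E}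
    {S : Set E} {ω g : E} {L s : ℝ} (hS : StarConvex ℝ ω S) (hmem : ω - s • g ∈ S)
    (hF : ∀ z ∈ S, HasGradientWithinAt F (F' z) S z)
    (hF' : ∀ z ∈ S, ⟪F' z - F' ω, z - ω⟫ ≤ L * ‖z - ω‖ ^ 2)
    (hs : 0 ≤ s) (hsL : s * L ≤ 1) :
    F (ω - s • g) ≤ F ω - s / 2 * ‖F' ω‖ ^ 2 + s / 2 * ‖g - F' ω‖ ^ 2 := by
  have h_quadratic : F (ω - s • g) ≤
      F ω + ⟪F' ω, ω - s • g - ω⟫ + L / 2 * ‖ω - s • g - ω‖ ^ 2 :=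
    image_le_quadratic_of_hasFDerivWithinAt hS hmem (fun z hz ↦ (hF z hz).hasFDerivWithinAt)
      (fun z hz ↦ by simpa [inner_sub_left] using hF' z hz)
  have h_step : ω - s • g - ω = -(s • g) := by abel
  calc
    F (ω - s • g) ≤ F ω - s * ⟪F' ω, g⟫ + s / 2 * (s * L) * ‖g‖ ^ 2 := by
      rw [h_step, inner_neg_right, real_inner_smul_right, norm_neg, norm_smul,
        Real.norm_of_nonneg hs] at h_quadratic
      linarith
    _ ≤ F ω - s * ⟪F' ω, g⟫ + s / 2 * 1 * ‖g‖ ^ 2 := by gcongr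
    _ = F ω - s / 2 * ‖F' ω‖ ^ 2 + s / 2 * ‖g - F' ω‖ ^ 2 := by
      rw [norm_sub_sq_real, real_inner_comm]
      ring

end InnerProductSpace

/-- **Inexact-gradient descent bound.**
Let `F` be differentiable with `L`-Lipschitz gradient, let `s > 0` with
`s * L ≤ 1`, and set `ω' = ω - s • g`. Then
`F ω' ≤ F ω - (s/2) * ‖∇F ω‖² + (s/2) * ‖g - ∇F ω‖²`. -/
theorem inexact_gradient_descent_bound
    (d : ℕ) (F : EuclideanSpace ℝ (Fin d) → ℝ) (L : ℝ)
    (hF : Differentiable ℝ F)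
    (hLip : ∀ x y : EuclideanSpace ℝ (Fin d),
      ‖gradient F x - gradient F y‖ ≤ L * ‖x - y‖)
    (ω g ω' : EuclideanSpace ℝ (Fin d)) (s : ℝ)
    (hs : 0 < s) (hsL : s * L ≤ 1)
    (hω' : ω' = ω - s • g) :
    F ω' ≤ F ω - (s / 2) * ‖gradient F ω‖ ^ 2
      + (s / 2) * ‖g - gradient F ω‖ ^ 2 :=
  hω' ▸ inexact_gradient_descent_bound_general (starConvex_univ ω) (mem_univ _)
    (fun z _ ↦ hasGradientWithinAt_univ.2 (hF z).hasGradientAt)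
    (fun z _ ↦ real_inner_le_mul_norm_sq (hLip z ω)) hs.le hsL
end

section
/- Consider one full FedEMA round starting from ω_EMA^{r−1}: each client c sets ω_c^{r,0} = ω_EMA^{r−1}, runs τ local steps ω_c^{r,t+1} = ω_c^{r,t} − η·(∇L_c(ω_c^{r,t}) − λ·∇H(ω_c^{r,t})), the server aggregates ω^r = Σ_c p_c·ω_c^{r,τ} and sets ω_EMA^r = β·ω_EMA^{r−1} + (1−β)·ω^r. Assume each ∇L_c is L-Lipschitz, ‖∇L_c(ω)‖ ≤ G and ‖∇H(ω)‖ ≤ γ for all c, ω, and that the effective step size s = η·(1−β)·τ satisfies s·L ≤ 1. Then the global loss L = Σ_c p_c·L_c decreases up to a drift-induced error: L(ω_EMA^r) ≤ L(ω_EMA^{r−1}) − (s/2)·‖∇L(ω_EMA^{r−1})‖² + (s/2)·(λγ + L·η·τ·(G + λγ))². -/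
/-!
Each client moves along its gradient at the starting point up to an error of size at most
`D = λγ + Lητ(G + λγ)` per unit of step size: the regularizer contributes `λγ`, and since after at
most `τ` steps the iterate has travelled at most `ητ(G + λγ)`, the `L`-Lipschitz gradient has
changed by at most `Lητ(G + λγ)`. This error survives weighted averaging, so the new average lies
within `sD` of the exact gradient step `ω - s∇F(ω)` for the global loss `F`, whose gradient is again
`L`-Lipschitz. For such an inexact step with `sL ≤ 1` the descent inequality, after completing the
square, costs only `(s/2)D²` on top of the usual decrease `(s/2)‖∇F(ω)‖²`.
-/

section InnerProductSpace

variable {E : Type*} [NormedAddCommGroup E] [InnerProductSpace ℝ E] [CompleteSpace E]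

open AffineMap in
theorem le_add_inner_add_norm_sq_of_gradient_lipschitz
    {f : E → ℝ} {f' : E → E} {L : ℝ} {x y : E}
    (hf : ∀ z ∈ segment ℝ x y, HasGradientAt f (f' z) z)
    (hL : ∀ z ∈ segment ℝ x y, ‖f' z - f' x‖ ≤ L * ‖z - x‖) :
    f y ≤ f x + inner ℝ (f' x) (y - x) + L / 2 * ‖y - x‖ ^ 2 := by
  have hmem {t : ℝ} (ht : t ∈ Set.Icc 0 1) : lineMap x y t ∈ segment ℝ x y := by
    rw [segment_eq_image_lineMap]
    exact Set.mem_image_of_mem _ ht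
  have hderiv (t : ℝ) (ht : t ∈ Set.Icc 0 1) :
      HasDerivAt (fun t => f (lineMap x y t)) (inner ℝ (f' (lineMap x y t)) (y - x)) t :=
    (hf _ (hmem ht)).hasFDerivAt.comp_hasDerivAt t hasDerivAt_lineMap
  have hquad (t : ℝ) :
      HasDerivAt (fun t => f x + t * inner ℝ (f' x) (y - x) + L / 2 * ‖y - x‖ ^ 2 * t ^ 2)
        (inner ℝ (f' x) (y - x) + L * ‖y - x‖ ^ 2 * t) t :=
    ((((hasDerivAt_id t).mul_const _).const_add (f x)).add
      ((hasDerivAt_pow 2 t).const_mul (L / 2 * ‖y - x‖ ^ 2))).congr_deriv (by push_cast; ring)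
  have hslope (t : ℝ) (ht : t ∈ Set.Ico 0 1) :
      inner ℝ (f' (lineMap x y t)) (y - x) ≤
        inner ℝ (f' x) (y - x) + L * ‖y - x‖ ^ 2 * t := by
    have hchange : ‖f' (lineMap x y t) - f' x‖ ≤ L * (t * ‖y - x‖) := by
      simpa [← dist_eq_norm, abs_of_nonneg ht.1, dist_comm] using
        hL _ (hmem (Set.Ico_subset_Icc_self ht))
    calc inner ℝ (f' (lineMap x y t)) (y - x)
        = inner ℝ (f' x) (y - x) + inner ℝ (f' (lineMap x y t) - f' x) (y - x) := by
          rw [inner_sub_left]; ring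
      _ ≤ inner ℝ (f' x) (y - x) + L * (t * ‖y - x‖) * ‖y - x‖ := by
          gcongr
          exact (real_inner_le_norm _ _).trans (by gcongr)
      _ = inner ℝ (f' x) (y - x) + L * ‖y - x‖ ^ 2 * t := by ring
  simpa using image_le_of_deriv_right_le_deriv_boundary
    (fun t ht => (hderiv t ht).continuousAt.continuousWithinAt)
    (fun t ht => (hderiv t (Set.Ico_subset_Icc_self ht)).hasDerivWithinAt) (by simp)
    (fun t _ => (hquad t).continuousAt.continuousWithinAt)
    (fun t _ => (hquad t).hasDerivWithinAt) hslope (Set.right_mem_Icc.2 zero_le_one)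

theorem le_of_inexact_gradient_step {f : E → ℝ} {f' : E → E} {L s D : ℝ} {x y : E}
    (hf : ∀ z ∈ segment ℝ x y, HasGradientAt f (f' z) z)
    (hL : ∀ z ∈ segment ℝ x y, ‖f' z - f' x‖ ≤ L * ‖z - x‖)
    (hs : 0 ≤ s) (hsL : s * L ≤ 1) (hy : ‖y - (x - s • f' x)‖ ≤ s * D) :
    f y ≤ f x - s / 2 * ‖f' x‖ ^ 2 + s / 2 * D ^ 2 := by
  obtain rfl | hs := hs.eq_or_lt
  · have hyx : y = x := by simpa [sub_eq_zero] using hy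
    simp [hyx]
  have hdescent := le_add_inner_add_norm_sq_of_gradient_lipschitz hf hL
  have hsquare : ‖y - x‖ ^ 2 + 2 * s * inner ℝ (f' x) (y - x) + s ^ 2 * ‖f' x‖ ^ 2 ≤
      s ^ 2 * D ^ 2 := by
    calc ‖y - x‖ ^ 2 + 2 * s * inner ℝ (f' x) (y - x) + s ^ 2 * ‖f' x‖ ^ 2
        = ‖(y - x) + s • f' x‖ ^ 2 := by
          rw [norm_add_sq_real, real_inner_smul_right, real_inner_comm, norm_smul,
            Real.norm_of_nonneg hs.le]
          ring
      _ = ‖y - (x - s • f' x)‖ ^ 2 := by rw [sub_sub_eq_add_sub, add_sub_right_comm]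
      _ ≤ (s * D) ^ 2 := by gcongr
      _ = s ^ 2 * D ^ 2 := mul_pow s D 2
  refine le_of_mul_le_mul_left ?_ hs
  have hcurvature : s * L * ‖y - x‖ ^ 2 ≤ 1 * ‖y - x‖ ^ 2 := by gcongr
  linarith [mul_le_mul_of_nonneg_left hdescent hs.le]

theorem hasGradientAt_sum_mul {ι : Type*} {s : Finset ι} {p : ι → ℝ} {f : ι → E → ℝ}
    {f' : ι → E} {x : E} (hf : ∀ i ∈ s, HasGradientAt (f i) (f' i) x) :
    HasGradientAt (fun y => ∑ i ∈ s, p i * f i y) (∑ i ∈ s, p i • f' i) x := by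
  rw [hasGradientAt_iff_hasFDerivAt, map_sum]
  simp only [map_smulₛₗ, conj_trivial]
  exact HasFDerivAt.fun_sum fun i hi => (hf i hi).hasFDerivAt.const_mul (p i)

end InnerProductSpace

section NormedSpace

variable {E : Type*} [SeminormedAddCommGroup E] [NormedSpace ℝ E]

theorem norm_sum_smul_sub_sum_smul_le {ι : Type*} {s : Finset ι} {p : ι → ℝ}
    (hp : ∀ i ∈ s, 0 ≤ p i) (hsum : ∑ i ∈ s, p i = 1) {u v : ι → E} {r : ℝ}
    (huv : ∀ i ∈ s, ‖u i - v i‖ ≤ r) :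
    ‖∑ i ∈ s, p i • u i - ∑ i ∈ s, p i • v i‖ ≤ r := by
  simp only [← Finset.sum_sub_distrib, ← smul_sub, ← mem_closedBall_zero_iff] at huv ⊢
  exact (convex_closedBall 0 r).sum_mem hp hsum huv

theorem norm_sub_constant_steps_le {x d : ℕ → E} {g : E} {η D : ℝ} {n : ℕ} (hη : 0 ≤ η)
    (hx : ∀ t < n, x (t + 1) = x t - η • d t) (hd : ∀ t < n, ‖d t - g‖ ≤ D) :
    ‖x n - (x 0 - (η * n) • g)‖ ≤ η * n * D := by
  have hstep {t : ℕ} (ht : t < n) :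
      dist (x t + (η * t) • g) (x (t + 1) + (η * (t + 1 : ℕ)) • g) ≤ η * D := by
    calc dist (x t + (η * t) • g) (x (t + 1) + (η * (t + 1 : ℕ)) • g)
        = ‖η • (d t - g)‖ := by
          rw [dist_eq_norm, hx t ht]
          push_cast
          congr 1
          module
      _ ≤ η * D := by
          rw [norm_smul, Real.norm_of_nonneg hη]
          gcongr
          exact hd t ht
  calc ‖x n - (x 0 - (η * n) • g)‖
      = dist (x 0 + (η * (0 : ℕ)) • g) (x n + (η * n) • g) := by
        rw [dist_comm, dist_eq_norm]
        congr 1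
        push_cast
        module
    _ ≤ ∑ _t ∈ Finset.range n, η * D := dist_le_range_sum_of_dist_le n hstep
    _ = η * n * D := by
        rw [Finset.sum_const, Finset.card_range, nsmul_eq_mul]
        ring

theorem norm_perturbed_steps_sub_constant_steps_le {v : E → E} {x e : ℕ → E} {L η G ρ : ℝ}
    {n : ℕ} (hL : 0 ≤ L) (hη : 0 ≤ η) (hLip : ∀ y, ‖v y - v (x 0)‖ ≤ L * ‖y - x 0‖)
    (hG : ∀ t < n, ‖v (x t)‖ ≤ G) (he : ∀ t < n, ‖e t‖ ≤ ρ)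
    (hx : ∀ t < n, x (t + 1) = x t - η • (v (x t) - e t)) :
    ‖x n - (x 0 - (η * n) • v (x 0))‖ ≤ η * n * (ρ + L * η * n * (G + ρ)) := by
  refine norm_sub_constant_steps_le hη hx fun t ht => ?_
  have hstep {k : ℕ} (hk : k < n) : ‖v (x k) - e k‖ ≤ G + ρ :=
    (norm_sub_le _ _).trans (add_le_add (hG k hk) (he k hk))
  have hbound : 0 ≤ G + ρ := (norm_nonneg _).trans (hstep ht)
  have hdrift : ‖x t - x 0‖ ≤ η * n * (G + ρ) :=
    calc ‖x t - x 0‖ ≤ η * t * (G + ρ) := by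
          simpa using norm_sub_constant_steps_le (g := 0) hη
            (fun k hk => hx k (hk.trans ht)) (fun k hk => by simpa using hstep (hk.trans ht))
      _ ≤ η * n * (G + ρ) := by gcongr
  calc ‖v (x t) - e t - v (x 0)‖
      = ‖(v (x t) - v (x 0)) - e t‖ := by rw [sub_right_comm]
    _ ≤ ‖v (x t) - v (x 0)‖ + ‖e t‖ := norm_sub_le _ _
    _ ≤ L * (η * n * (G + ρ)) + ρ :=
        add_le_add ((hLip _).trans (mul_le_mul_of_nonneg_left hdrift hL)) (he t ht)
    _ = ρ + L * η * n * (G + ρ) := by ring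

theorem norm_ema_sub_averaged_step_le {ι : Type*} {s : Finset ι} {p : ι → ℝ}
    (hp : ∀ i ∈ s, 0 ≤ p i) (hsum : ∑ i ∈ s, p i = 1) {β a r : ℝ} (hβ : β ≤ 1)
    {ω : E} {u g : ι → E} (hu : ∀ i ∈ s, ‖u i - (ω - a • g i)‖ ≤ r) :
    ‖β • ω + (1 - β) • ∑ i ∈ s, p i • u i - (ω - ((1 - β) * a) • ∑ i ∈ s, p i • g i)‖ ≤
      (1 - β) * r := by
  have hmean : ∑ i ∈ s, p i • (ω - a • g i) = ω - a • ∑ i ∈ s, p i • g i := by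
    simp only [smul_sub, Finset.sum_sub_distrib, ← Finset.sum_smul, hsum, one_smul,
      Finset.smul_sum, smul_comm a]
  calc ‖β • ω + (1 - β) • ∑ i ∈ s, p i • u i - (ω - ((1 - β) * a) • ∑ i ∈ s, p i • g i)‖
      = ‖(1 - β) • (∑ i ∈ s, p i • u i - ∑ i ∈ s, p i • (ω - a • g i))‖ := by
        rw [hmean]
        congr 1
        module
    _ = (1 - β) * ‖∑ i ∈ s, p i • u i - ∑ i ∈ s, p i • (ω - a • g i)‖ := by
        rw [norm_smul, Real.norm_of_nonneg (sub_nonneg.2 hβ)]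
    _ ≤ (1 - β) * r :=
        mul_le_mul_of_nonneg_left (norm_sum_smul_sub_sum_smul_le hp hsum hu) (sub_nonneg.2 hβ)

end NormedSpace

theorem nonneg_of_norm_sub_le_mul_norm_sub {E F : Type*} [NormedAddCommGroup E] [Nontrivial E]
    [SeminormedAddCommGroup F] {v : E → F} {L : ℝ}
    (hv : ∀ x y, ‖v x - v y‖ ≤ L * ‖x - y‖) : 0 ≤ L := by
  obtain ⟨x, y, hxy⟩ := exists_pair_ne E
  exact nonneg_of_mul_nonneg_left ((norm_nonneg _).trans (hv x y)) (norm_sub_pos_iff.2 hxy)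

theorem fedema_per_round_descent_general {ι E : Type*} [Fintype ι] [NormedAddCommGroup E]
    [InnerProductSpace ℝ E] [CompleteSpace E]
    {p : ι → ℝ} (hp : ∀ c, 0 ≤ p c) (hpsum : ∑ c, p c = 1)
    {Lc : ι → E → ℝ} (hdiff : ∀ c, Differentiable ℝ (Lc c))
    {L η β G ρ : ℝ}
    (hLip : ∀ c x y, ‖gradient (Lc c) x - gradient (Lc c) y‖ ≤ L * ‖x - y‖)
    (hη : 0 ≤ η) (hβ : β ≤ 1) {τ : ℕ} (hsL : η * (1 - β) * τ * L ≤ 1)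
    {ωprev ωr ωnew : E} {x e : ι → ℕ → E}
    (hG : ∀ c, ∀ t < τ, ‖gradient (Lc c) (x c t)‖ ≤ G) (he : ∀ c, ∀ t < τ, ‖e c t‖ ≤ ρ)
    (hx0 : ∀ c, x c 0 = ωprev)
    (hstep : ∀ c, ∀ t < τ, x c (t + 1) = x c t - η • (gradient (Lc c) (x c t) - e c t))
    (hagg : ωr = ∑ c, p c • x c τ) (hema : ωnew = β • ωprev + (1 - β) • ωr) :
    ∑ c, p c * Lc c ωnew ≤ ∑ c, p c * Lc c ωprev
      - η * (1 - β) * τ / 2 * ‖gradient (fun ω => ∑ c, p c * Lc c ω) ωprev‖ ^ 2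
      + η * (1 - β) * τ / 2 * (ρ + L * η * τ * (G + ρ)) ^ 2 := by
  have hs : 0 ≤ η * (1 - β) * τ := by have := sub_nonneg.2 hβ; positivity
  have hgrad (ω : E) : HasGradientAt (fun ω => ∑ c, p c * Lc c ω)
      (∑ c, p c • gradient (Lc c) ω) ω :=
    hasGradientAt_sum_mul fun c _ => (hdiff c ω).hasGradientAt
  have hgradLip (ω : E) : ‖∑ c, p c • gradient (Lc c) ω - ∑ c, p c • gradient (Lc c) ωprev‖ ≤
      L * ‖ω - ωprev‖ :=
    norm_sum_smul_sub_sum_smul_le (fun c _ => hp c) hpsum fun c _ => hLip c ω ωprev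
  rw [(hgrad ωprev).gradient]
  -- `L` can only be negative when `E` is the zero space.
  obtain hE | hE := subsingleton_or_nontrivial E
  · rw [Subsingleton.elim ωnew ωprev, Subsingleton.elim (∑ c, p c • gradient (Lc c) ωprev) 0]
    simpa using mul_nonneg (div_nonneg hs zero_le_two) (sq_nonneg (ρ + L * η * τ * (G + ρ)))
  have hL : 0 ≤ L := by
    obtain ⟨c, -⟩ := Finset.nonempty_of_sum_ne_zero (hpsum.trans_ne one_ne_zero)
    exact nonneg_of_norm_sub_le_mul_norm_sub (hLip c)
  have hclient (c : ι) : ‖x c τ - (ωprev - (η * τ) • gradient (Lc c) ωprev)‖ ≤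
      η * τ * (ρ + L * η * τ * (G + ρ)) := by
    rw [← hx0 c]
    exact norm_perturbed_steps_sub_constant_steps_le hL hη (hLip c · _) (hG c) (he c) (hstep c)
  refine le_of_inexact_gradient_step (fun ω _ => hgrad ω) (fun ω _ => hgradLip ω) hs hsL ?_
  rw [hema, hagg, mul_comm η, mul_assoc (1 - β), mul_assoc (1 - β)]
  exact norm_ema_sub_averaged_step_le (fun c _ => hp c) hpsum hβ fun c _ => hclient c

/-- **Per-round descent of the global loss in FedEMA.**
One FedEMA round: each client `c` starts at `x c 0 = ωprev`, runs `τ` local steps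
`x c (t+1) = x c t - η • (∇L_c (x c t) - λ • ∇H (x c t))`; the server aggregates
`ωr = ∑ c, p c • x c τ` and sets `ωnew = β • ωprev + (1-β) • ωr`. Under
`L`-Lipschitz client gradients, `‖∇L_c ω‖ ≤ G`, `‖∇H ω‖ ≤ γ`, and effective step
size `s = η * (1-β) * τ` with `s * L ≤ 1`, the global loss
`Lg = fun ω => ∑ c, p c * L_c ω` satisfies
`Lg ωnew ≤ Lg ωprev - (s/2) * ‖∇Lg ωprev‖² + (s/2) * (λγ + L * η * τ * (G + λγ))²`. -/
theorem fedema_per_round_descent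
    (d C : ℕ) (p : Fin C → ℝ) (hp : ∀ c, 0 ≤ p c) (hpsum : ∑ c, p c = 1)
    (Lc : Fin C → EuclideanSpace ℝ (Fin d) → ℝ)
    (H : EuclideanSpace ℝ (Fin d) → ℝ)
    (hdiff : ∀ c, Differentiable ℝ (Lc c)) (hH : Differentiable ℝ H)
    (L η lam β G γ : ℝ)
    (hLip : ∀ c, ∀ x y : EuclideanSpace ℝ (Fin d),
      ‖gradient (Lc c) x - gradient (Lc c) y‖ ≤ L * ‖x - y‖)
    (hG : ∀ c, ∀ ω : EuclideanSpace ℝ (Fin d), ‖gradient (Lc c) ω‖ ≤ G)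
    (hγ : ∀ ω : EuclideanSpace ℝ (Fin d), ‖gradient H ω‖ ≤ γ)
    (hη : 0 < η) (hlam : 0 ≤ lam) (hβ : β ∈ Set.Ioo (0 : ℝ) 1)
    (τ : ℕ) (hτ : 1 ≤ τ)
    (hsL : η * (1 - β) * τ * L ≤ 1)
    (ωprev ωr ωnew : EuclideanSpace ℝ (Fin d))
    (x : Fin C → ℕ → EuclideanSpace ℝ (Fin d))
    (hx0 : ∀ c, x c 0 = ωprev)
    (hstep : ∀ c, ∀ t : ℕ,
      x c (t + 1) = x c t - η • (gradient (Lc c) (x c t) - lam • gradient H (x c t)))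
    (hagg : ωr = ∑ c, p c • x c τ)
    (hema : ωnew = β • ωprev + (1 - β) • ωr) :
    (fun ω : EuclideanSpace ℝ (Fin d) => ∑ c, p c * Lc c ω) ωnew
      ≤ (fun ω : EuclideanSpace ℝ (Fin d) => ∑ c, p c * Lc c ω) ωprev
        - (η * (1 - β) * τ / 2) *
            ‖gradient (fun ω : EuclideanSpace ℝ (Fin d) => ∑ c, p c * Lc c ω) ωprev‖ ^ 2
        + (η * (1 - β) * τ / 2) *
            (lam * γ + L * η * τ * (G + lam * γ)) ^ 2 := by
  exact fedema_per_round_descent_general hp hpsum hdiff hLip hη.le hβ.2.le hsL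
    (fun c t _ => hG c (x c t))
    (fun c t _ => (norm_smul_of_nonneg hlam _).trans_le (mul_le_mul_of_nonneg_left (hγ _) hlam))
    hx0 (fun c t _ => hstep c t) hagg hema
end
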